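/- arXiv:2512.15992 — 4 statements merged into one kernel-verified Lean document; each statement's English description precedes it below -/
import Mathlib

section
/- Let H be a real Hilbert space, let D ⊆ H, and let K ≥ 0 satisfy ‖d‖ ≤ K for all d ∈ D. Let f belong to the closure of the convex hull of D. Then for every natural number N ≥ 1 there exist d₁, …, d_N ∈ D (repetitions allowed) such that ‖f − (1/N) Σ_{i=1}^N d_i‖ ≤ 2K · N^{−1/2}. -/
/-!
The sampling argument is derandomized into a greedy choice. Since `f` lies in the closed convex
hull of `D`, no half-space strictly separates `f` from `D`, so for every direction `v` some `d ∈ D`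
makes `⟪v, f - d⟫` at most any given `ε > 0` (`exists_inner_sub_le`). If `e` is the sum of the errors
`f - dᵢ` chosen so far, picking the next `d` with `ε = K²` in the direction `v = e + f` gives
`‖e + (f - d)‖² = ‖e‖² + 2⟪e + f, f - d⟫ - ‖f‖² + ‖d‖²`, so the squared norm grows by at
most `3K² ≤ 4K²` per step (`exists_norm_sum_sub_sq_le`). Hence `‖∑ (f - dᵢ)‖ ≤ 2K√N`, and dividing
by `N` gives the estimate.
-/

open scoped InnerProductSpace in
lemma exists_inner_sub_le {H : Type*} [NormedAddCommGroup H] [InnerProductSpace ℝ H]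
    {D : Set H} {f : H} (hf : f ∈ closure (convexHull ℝ D)) (v : H) {ε : ℝ} (hε : 0 < ε) :
    ∃ d ∈ D, ⟪v, f - d⟫_ℝ ≤ ε := by
  by_contra! h
  have hsub : closure (convexHull ℝ D) ⊆ {x | innerSL ℝ v x ≤ ⟪v, f⟫_ℝ - ε} := by
    refine closure_minimal (convexHull_min ?_ ?_) ?_
    · intro d hd
      have := h d hd
      rw [inner_sub_right] at this
      simp only [Set.mem_ofPred_eq, innerSL_apply_apply]
      linarith
    · exact convex_halfSpace_le (innerSL ℝ v).toLinearMap.isLinear _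
    · exact isClosed_le (innerSL ℝ v).continuous continuous_const
  have := hsub hf
  simp only [Set.mem_ofPred_eq, innerSL_apply_apply] at this
  linarith

open scoped InnerProductSpace in
/-- The greedy choice in a form that needs no positivity of the slack `K ^ 2`: for `K = 0` both `f`
and all elements of `D` vanish. -/
lemma exists_inner_sub_le_sq {H : Type*} [NormedAddCommGroup H] [InnerProductSpace ℝ H]
    {D : Set H} {K : ℝ} (hK : 0 ≤ K) (hD : ∀ d ∈ D, ‖d‖ ≤ K)
    {f : H} (hf : f ∈ closure (convexHull ℝ D)) (v : H) :
    ∃ d ∈ D, ⟪v, f - d⟫_ℝ ≤ K ^ 2 := by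
  rcases hK.eq_or_lt with rfl | hK
  · obtain ⟨d, hd, -⟩ := exists_inner_sub_le hf 0 one_pos
    have hf0 : f ∈ Metric.closedBall (0 : H) 0 :=
      closure_minimal (convexHull_min (fun x hx => by simpa using hD x hx)
        (convex_closedBall _ _)) Metric.isClosed_closedBall hf
    have hd0 : d = 0 := by simpa using hD d hd
    have hf0 : f = 0 := by simpa using hf0
    exact ⟨d, hd, by simp [hd0, hf0]⟩
  · exact exists_inner_sub_le hf v (by positivity)

lemma exists_norm_sum_sub_sq_le {H : Type*} [NormedAddCommGroup H] [InnerProductSpace ℝ H]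
    {D : Set H} {K : ℝ} (hK : 0 ≤ K) (hD : ∀ d ∈ D, ‖d‖ ≤ K)
    {f : H} (hf : f ∈ closure (convexHull ℝ D)) (N : ℕ) :
    ∃ d : Fin N → H, (∀ i, d i ∈ D) ∧ ‖∑ i, (f - d i)‖ ^ 2 ≤ 4 * K ^ 2 * N := by
  induction N with
  | zero => exact ⟨fun i => i.elim0, fun i => i.elim0, by simp⟩
  | succ n ih =>
    obtain ⟨d, hd, hsum⟩ := ih
    set e := ∑ i, (f - d i)
    obtain ⟨x, hx, hle⟩ := exists_inner_sub_le_sq hK hD hf (e + f)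
    refine ⟨Fin.snoc d x, fun i => ?_, ?_⟩
    · refine Fin.lastCases ?_ (fun j => ?_) i
      · simpa using hx
      · simpa using hd j
    · have hxK : ‖x‖ ^ 2 ≤ K ^ 2 := pow_le_pow_left₀ (norm_nonneg _) (hD x hx) 2
      rw [Fin.sum_univ_castSucc]
      simp only [Fin.snoc_castSucc, Fin.snoc_last]
      change ‖e + (f - x)‖ ^ 2 ≤ _
      rw [norm_add_sq_real, norm_sub_sq_real, inner_sub_right]
      rw [inner_sub_right, inner_add_left, inner_add_left, real_inner_self_eq_norm_sq] at hle
      push_cast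
      nlinarith [sq_nonneg ‖f‖, sq_nonneg K]

/-- **Maurey's sampling estimate.** Let `H` be a real Hilbert space,
`D ⊆ H` with `‖d‖ ≤ K` for all `d ∈ D`, and `f` in the closure of the convex hull of `D`.
Then for every `N ≥ 1` there exist `d₁, …, d_N ∈ D` with
`‖f − (1/N) ∑ dᵢ‖ ≤ 2K N^{−1/2}`. -/
theorem stmt_8 {H : Type*} [NormedAddCommGroup H] [InnerProductSpace ℝ H] [CompleteSpace H]
    (D : Set H) (K : ℝ) (hK : 0 ≤ K) (hD : ∀ d ∈ D, ‖d‖ ≤ K)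
    (f : H) (hf : f ∈ closure (convexHull ℝ D)) :
    ∀ N : ℕ, 1 ≤ N → ∃ d : Fin N → H, (∀ i, d i ∈ D) ∧
      ‖f - (N : ℝ)⁻¹ • ∑ i, d i‖ ≤ 2 * K * (N : ℝ) ^ (-(1 / 2 : ℝ)) := by
  intro N hN
  obtain ⟨d, hd, hsum⟩ := exists_norm_sum_sub_sq_le hK hD hf N
  refine ⟨d, hd, ?_⟩
  have hN0 : (0 : ℝ) < N := by exact_mod_cast hN
  have hs : 0 < √(N : ℝ) := Real.sqrt_pos.mpr hN0
  have hss : √(N : ℝ) ^ 2 = N := Real.sq_sqrt hN0.le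
  have hbound : ‖∑ i, (f - d i)‖ ≤ 2 * K * √(N : ℝ) := by
    refine (sq_le_sq₀ (norm_nonneg _) (by positivity)).mp ?_
    rw [mul_pow, hss]
    linarith
  have herr : f - (N : ℝ)⁻¹ • ∑ i, d i = (N : ℝ)⁻¹ • ∑ i, (f - d i) := by
    rw [Finset.sum_sub_distrib, smul_sub, Finset.sum_const, Finset.card_univ, Fintype.card_fin,
      ← Nat.cast_smul_eq_nsmul ℝ, inv_smul_smul₀ hN0.ne']
  rw [herr, norm_smul, Real.norm_of_nonneg (by positivity), Real.rpow_neg hN0.le,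
    ← Real.sqrt_eq_rpow]
  calc (N : ℝ)⁻¹ * ‖∑ i, (f - d i)‖ ≤ (N : ℝ)⁻¹ * (2 * K * √(N : ℝ)) := by gcongr
    _ = 2 * K * (√(N : ℝ))⁻¹ := by
      nth_rewrite 1 [← hss]
      field_simp
end

section
/- There exist t ∈ ℝ and τ ∈ ℝ with τ ≠ 0 such that ∫_0^∞ s · exp(−π (s − t)²) · exp(−2πi s τ) ds ≠ 0. -/
/-!
For `t = 0` the integral is a continuous function of `τ` (dominated convergence with the integrable
bound `|s e^{-π s²}|`, the exponential factor having modulus one), and at `τ = 0` it equals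
`∫₀^∞ s e^{-π s²} ds = 1 / (2π) ≠ 0`. Hence it is nonzero on a neighbourhood of `0`, and every
neighbourhood of `0` in `ℝ` contains some `τ ≠ 0`.
-/

/-- The short-time Fourier transform is continuous in the frequency along `t = 0`. -/
theorem continuous_relu_stft_zero : Continuous fun τ : ℝ =>
    ∫ s in Set.Ioi (0 : ℝ), (s : ℂ) * ((Real.exp (-Real.pi * (s - 0) ^ 2) : ℝ) : ℂ) *
      Complex.exp (((-2 * Real.pi * s * τ : ℝ) : ℂ) * Complex.I) := by
  refine MeasureTheory.continuous_of_dominated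
    (bound := fun s : ℝ => ‖s * Real.exp (-Real.pi * s ^ 2)‖) (fun τ => ?_) (fun τ => ?_) ?_ ?_
  · exact Continuous.aestronglyMeasurable (by fun_prop)
  · refine Filter.Eventually.of_forall fun s => ?_
    rw [norm_mul, Complex.norm_exp_ofReal_mul_I, ← Complex.ofReal_mul, Complex.norm_real]
    simp
  · exact (integrable_mul_exp_neg_mul_sq Real.pi_pos).norm.integrableOn
  · exact Filter.Eventually.of_forall fun s => by fun_prop

/-- **Condition (A) for the ReLU–Gaussian pair.** There exist `t ∈ ℝ` and
`τ ≠ 0` such that the short-time Fourier transform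
`V_φ σ(t, τ) = ∫₀^∞ s e^{−π(s−t)²} e^{−2πi s τ} ds` of the ReLU with Gaussian window
does not vanish. -/
theorem stmt_15 :
    ∃ (t τ : ℝ), τ ≠ 0 ∧
      (∫ s in Set.Ioi (0 : ℝ), (s : ℂ) * ((Real.exp (-Real.pi * (s - t) ^ 2) : ℝ) : ℂ) *
        Complex.exp (((-2 * Real.pi * s * τ : ℝ) : ℂ) * Complex.I)) ≠ 0 := by
  have h_zero : (∫ s in Set.Ioi (0 : ℝ),
      (s : ℂ) * ((Real.exp (-Real.pi * (s - 0) ^ 2) : ℝ) : ℂ) *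
        Complex.exp (((-2 * Real.pi * s * 0 : ℝ) : ℂ) * Complex.I)) ≠ 0 := by
    have h := integral_mul_cexp_neg_mul_sq (b := (Real.pi : ℂ)) (by simpa using Real.pi_pos)
    have h_ne : (2 * (Real.pi : ℂ))⁻¹ ≠ 0 := by simp [Real.pi_ne_zero]
    rw [← h] at h_ne
    simpa using h_ne
  have h_near := continuous_relu_stft_zero.continuousAt.eventually_ne h_zero
  obtain ⟨τ, h_ne, hτ⟩ :=
    ((h_near.filter_mono nhdsWithin_le_nhds).and
      (self_mem_nhdsWithin : ({0}ᶜ : Set ℝ) ∈ nhdsWithin 0 {0}ᶜ)).exists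
  exact ⟨0, τ, hτ, h_ne⟩
end

section
/- For all x, ω ∈ ℝ, ∫_0^∞ t · exp(−π (t − x)²) · exp(−2πi ω t) dt = (x − iω) · exp(−2πi ω x) · ∫_{−x}^∞ exp(−π s²) · exp(−2πi ω s) ds + (1/(2π)) · exp(−π x²), where all integrals are absolutely convergent complex-valued Lebesgue integrals. -/
open MeasureTheory

/-!
Write `g t = exp (-π (t - x)²) exp (-2πiωt)`. Then `g' t = -2π ((t - x) + iω) g t`, so
`t g t = (x - iω) g t - g' t / (2π)`. The boundary term is `∫₀^∞ g' = -g 0 = -exp (-π x²)`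
(`integral_relu_deriv`), and the translation `s = t - x` turns `∫₀^∞ g` into
`exp (-2πiωx) ∫_{-x}^∞ exp (-π s²) exp (-2πiωs) ds` (`integral_relu_window`).
-/

/-- The Gaussian times the character of frequency `ω`, whose integral over `(-x, ∞)` is the
incomplete Gaussian integral. -/
noncomputable def modGauss (ω s : ℝ) : ℂ :=
  ((Real.exp (-Real.pi * s ^ 2) : ℝ) : ℂ) *
    Complex.exp (((-2 * Real.pi * ω * s : ℝ) : ℂ) * Complex.I)

/-- The window centred at `x` times the character of frequency `ω`. -/
noncomputable def shiftGauss (x ω t : ℝ) : ℂ :=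
  ((Real.exp (-Real.pi * (t - x) ^ 2) : ℝ) : ℂ) *
    Complex.exp (((-2 * Real.pi * ω * t : ℝ) : ℂ) * Complex.I)

lemma shiftGauss_eq (x ω t : ℝ) :
    shiftGauss x ω t =
      Complex.exp (((-2 * Real.pi * ω * x : ℝ) : ℂ) * Complex.I) * modGauss ω (t - x) := by
  unfold shiftGauss modGauss
  rw [mul_left_comm, ← Complex.exp_add]
  congr 2
  push_cast
  ring

lemma continuous_modGauss (ω : ℝ) : Continuous (modGauss ω) := by
  unfold modGauss
  fun_prop

lemma norm_modGauss (ω s : ℝ) : ‖modGauss ω s‖ = Real.exp (-Real.pi * s ^ 2) := by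
  rw [modGauss, norm_mul, Complex.norm_exp_ofReal_mul_I, mul_one, Complex.norm_real,
    Real.norm_eq_abs, abs_of_pos (Real.exp_pos _)]

lemma integrable_modGauss (ω : ℝ) : Integrable (modGauss ω) := by
  refine (integrable_exp_neg_mul_sq Real.pi_pos).mono'
    (continuous_modGauss ω).aestronglyMeasurable (.of_forall fun s => ?_)
  exact (norm_modGauss ω s).le

lemma integrable_mul_modGauss (ω : ℝ) : Integrable (fun s : ℝ => (s : ℂ) * modGauss ω s) := by
  refine (integrable_mul_exp_neg_mul_sq Real.pi_pos).norm.mono'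
    (Complex.continuous_ofReal.mul (continuous_modGauss ω)).aestronglyMeasurable
    (.of_forall fun s => ?_)
  rw [norm_mul, norm_modGauss, norm_mul, Complex.norm_real, Real.norm_eq_abs (Real.exp _),
    abs_of_pos (Real.exp_pos _)]

lemma integrable_shiftGauss (x ω : ℝ) : Integrable (shiftGauss x ω) := by
  rw [funext (shiftGauss_eq x ω)]
  exact ((integrable_modGauss ω).comp_sub_right x).const_mul _

lemma integrable_mul_shiftGauss (x ω : ℝ) :
    Integrable (fun t : ℝ => (t : ℂ) * shiftGauss x ω t) := by
  have h := (((integrable_mul_modGauss ω).comp_sub_right x).const_mul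
    (Complex.exp (((-2 * Real.pi * ω * x : ℝ) : ℂ) * Complex.I))).add
    ((integrable_shiftGauss x ω).const_mul (x : ℂ))
  refine h.congr (.of_forall fun t => ?_)
  simp only [Pi.add_apply, shiftGauss_eq]
  push_cast
  ring

lemma hasDerivAt_shiftGauss (x ω t : ℝ) :
    HasDerivAt (shiftGauss x ω)
      (2 * Real.pi * (((x : ℂ) - Complex.I * ω) * shiftGauss x ω t - t * shiftGauss x ω t)) t := by
  have h1 : HasDerivAt (fun t : ℝ => -Real.pi * (t - x) ^ 2) (-Real.pi * (2 * (t - x))) t := by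
    simpa using (((hasDerivAt_id t).sub_const x).pow 2).const_mul (-Real.pi)
  have h2 : HasDerivAt (fun t : ℝ => -2 * Real.pi * ω * t) (-2 * Real.pi * ω) t := by
    simpa using (hasDerivAt_id t).const_mul (-2 * Real.pi * ω)
  have h := h1.exp.ofReal_comp.mul ((h2.ofReal_comp.mul_const Complex.I).cexp)
  refine h.congr_deriv ?_
  unfold shiftGauss
  push_cast
  ring

lemma integral_relu_deriv (x ω : ℝ) :
    (∫ t in Set.Ioi (0 : ℝ),
      2 * Real.pi * (((x : ℂ) - Complex.I * ω) * shiftGauss x ω t - t * shiftGauss x ω t))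
      = -((Real.exp (-Real.pi * x ^ 2) : ℝ) : ℂ) := by
  have hint : Integrable (fun t : ℝ =>
      2 * Real.pi * (((x : ℂ) - Complex.I * ω) * shiftGauss x ω t - t * shiftGauss x ω t)) :=
    (((integrable_shiftGauss x ω).const_mul _).sub (integrable_mul_shiftGauss x ω)).const_mul _
  have hlim := tendsto_zero_of_hasDerivAt_of_integrableOn_Ioi (a := 0)
    (fun t _ => hasDerivAt_shiftGauss x ω t) hint.integrableOn
    (integrable_shiftGauss x ω).integrableOn
  rw [integral_Ioi_of_hasDerivAt_of_tendsto' (fun t _ => hasDerivAt_shiftGauss x ω t)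
    hint.integrableOn hlim]
  simp [shiftGauss]

lemma integral_relu_window (x ω : ℝ) :
    (∫ t in Set.Ioi (0 : ℝ), shiftGauss x ω t) =
      Complex.exp (((-2 * Real.pi * ω * x : ℝ) : ℂ) * Complex.I) *
        ∫ s in Set.Ioi (-x), modGauss ω s := by
  have h := (measurePreserving_sub_right volume x).setIntegral_preimage_emb
    (measurableEmbedding_subRight x) (modGauss ω) (Set.Ioi (-x))
  have hs : (fun t : ℝ => t - x) ⁻¹' Set.Ioi (-x) = Set.Ioi 0 := by
    ext t
    simp
  rw [hs] at h
  rw [← h, ← integral_const_mul]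
  simp only [shiftGauss_eq]

/-- **explicit STFT of the ReLU.** For all `x, ω ∈ ℝ`,
`∫₀^∞ t e^{−π(t−x)²} e^{−2πiωt} dt
  = (x − iω) e^{−2πiωx} ∫_{−x}^∞ e^{−πs²} e^{−2πiωs} ds + (1/(2π)) e^{−πx²}`,
all integrals being absolutely convergent. -/
theorem stmt_16 (x ω : ℝ) :
    IntegrableOn (fun t : ℝ => (t : ℂ) * ((Real.exp (-Real.pi * (t - x) ^ 2) : ℝ) : ℂ) *
        Complex.exp (((-2 * Real.pi * ω * t : ℝ) : ℂ) * Complex.I)) (Set.Ioi 0) ∧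
    IntegrableOn (fun s : ℝ => ((Real.exp (-Real.pi * s ^ 2) : ℝ) : ℂ) *
        Complex.exp (((-2 * Real.pi * ω * s : ℝ) : ℂ) * Complex.I)) (Set.Ioi (-x)) ∧
    (∫ t in Set.Ioi (0 : ℝ), (t : ℂ) * ((Real.exp (-Real.pi * (t - x) ^ 2) : ℝ) : ℂ) *
        Complex.exp (((-2 * Real.pi * ω * t : ℝ) : ℂ) * Complex.I))
      = ((x : ℂ) - Complex.I * (ω : ℂ)) *
          Complex.exp (((-2 * Real.pi * ω * x : ℝ) : ℂ) * Complex.I) *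
          (∫ s in Set.Ioi (-x), ((Real.exp (-Real.pi * s ^ 2) : ℝ) : ℂ) *
            Complex.exp (((-2 * Real.pi * ω * s : ℝ) : ℂ) * Complex.I))
        + ((1 / (2 * Real.pi) * Real.exp (-Real.pi * x ^ 2) : ℝ) : ℂ) := by
  have hassoc (t : ℝ) : (t : ℂ) * ((Real.exp (-Real.pi * (t - x) ^ 2) : ℝ) : ℂ) *
      Complex.exp (((-2 * Real.pi * ω * t : ℝ) : ℂ) * Complex.I) = t * shiftGauss x ω t :=
    mul_assoc _ _ _
  simp only [hassoc]
  refine ⟨(integrable_mul_shiftGauss x ω).integrableOn, (integrable_modGauss ω).integrableOn, ?_⟩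
  change _ = _ * (∫ s in Set.Ioi (-x), modGauss ω s) + _
  have hd := integral_relu_deriv x ω
  rw [integral_const_mul, integral_sub ((integrable_shiftGauss x ω).const_mul _).integrableOn
    (integrable_mul_shiftGauss x ω).integrableOn, integral_const_mul,
    integral_relu_window] at hd
  have hpi : (Real.pi : ℂ) ≠ 0 := Complex.ofReal_ne_zero.mpr Real.pi_ne_zero
  rw [Complex.ofReal_mul (1 / (2 * Real.pi)), ← neg_eq_iff_eq_neg.mpr hd]
  push_cast
  field_simp
  ring
end

section
/- For all x, ω ∈ ℝ, ∫_{−x}^∞ s · exp(−π s²) · exp(−2πi ω s) ds = −iω · ∫_{−x}^∞ exp(−π s²) · exp(−2πi ω s) ds + (1/(2π)) · exp(−π x²) · exp(2πi ω x). -/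
open MeasureTheory

/-!
The function `g s = e^{-πs²} e^{-2πiωs}` satisfies `g' s = -2π s g s - 2πiω g s`. Both `g` and
`s ↦ s g s` are integrable, being dominated by Gaussian moments, so `g` vanishes at infinity and the
fundamental theorem of calculus on `(-x, ∞)` gives `-2π I₁ - 2πiω I₀ = -g (-x)`; solving for the
first moment `I₁` is the claim.
-/

/-- **first-moment identity.** For all `x, ω ∈ ℝ`,
`∫_{−x}^∞ s e^{−πs²} e^{−2πiωs} ds
  = −iω ∫_{−x}^∞ e^{−πs²} e^{−2πiωs} ds + (1/(2π)) e^{−πx²} e^{2πiωx}`. -/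
theorem stmt_17 (x ω : ℝ) :
    (∫ s in Set.Ioi (-x), (s : ℂ) * ((Real.exp (-Real.pi * s ^ 2) : ℝ) : ℂ) *
        Complex.exp (((-2 * Real.pi * ω * s : ℝ) : ℂ) * Complex.I))
      = -Complex.I * (ω : ℂ) *
          (∫ s in Set.Ioi (-x), ((Real.exp (-Real.pi * s ^ 2) : ℝ) : ℂ) *
            Complex.exp (((-2 * Real.pi * ω * s : ℝ) : ℂ) * Complex.I))
        + ((1 / (2 * Real.pi) * Real.exp (-Real.pi * x ^ 2) : ℝ) : ℂ) *
            Complex.exp (((2 * Real.pi * ω * x : ℝ) : ℂ) * Complex.I) := by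
  set g : ℝ → ℂ := fun s => ((Real.exp (-Real.pi * s ^ 2) : ℝ) : ℂ) *
    Complex.exp (((-2 * Real.pi * ω * s : ℝ) : ℂ) * Complex.I) with hg
  have hnorm : ∀ s : ℝ, ‖g s‖ = Real.exp (-Real.pi * s ^ 2) := fun s => by
    rw [hg]
    simp only [norm_mul, Complex.norm_exp_ofReal_mul_I, mul_one, Complex.norm_real,
      Real.norm_eq_abs, Real.abs_exp]
  have hcont : Continuous g := by fun_prop
  have hI0 : Integrable g :=
    (integrable_exp_neg_mul_sq Real.pi_pos).mono' hcont.aestronglyMeasurable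
      (.of_forall fun s => (hnorm s).le)
  have hI1 : Integrable (fun s : ℝ => (s : ℂ) * g s) :=
    (integrable_mul_exp_neg_mul_sq Real.pi_pos).mono (by fun_prop)
      (.of_forall fun s => by simp [hnorm])
  have hderiv : ∀ s : ℝ, HasDerivAt g
      (-2 * Real.pi * ((s : ℂ) * g s) + -2 * Real.pi * ω * Complex.I * g s) s := fun s => by
    have h1 : HasDerivAt (fun s : ℝ => Real.exp (-Real.pi * s ^ 2))
        (Real.exp (-Real.pi * s ^ 2) * (-Real.pi * (2 * s))) s := by
      simpa using ((hasDerivAt_pow 2 s).const_mul (-Real.pi)).exp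
    have h2 : HasDerivAt (fun s : ℝ => -2 * Real.pi * ω * s) (-2 * Real.pi * ω) s := by
      simpa using (hasDerivAt_id s).const_mul (-2 * Real.pi * ω)
    refine (h1.ofReal_comp.mul (h2.ofReal_comp.mul_const Complex.I).cexp).congr_deriv ?_
    simp only [hg]
    push_cast
    ring
  have hA := (hI1.const_mul (-2 * Real.pi : ℂ)).integrableOn (s := Set.Ioi (-x))
  have hB := (hI0.const_mul (-2 * Real.pi * ω * Complex.I : ℂ)).integrableOn (s := Set.Ioi (-x))
  have hlim := tendsto_zero_of_hasDerivAt_of_integrableOn_Ioi (a := -x) (fun s _ => hderiv s)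
    (hA.add hB) hI0.integrableOn
  have key := integral_Ioi_of_hasDerivAt_of_tendsto' (a := -x) (fun s _ => hderiv s)
    (hA.add hB) hlim
  rw [integral_add hA hB, integral_const_mul, integral_const_mul] at key
  have hgx : g (-x) = ((Real.exp (-Real.pi * x ^ 2) : ℝ) : ℂ) *
      Complex.exp (((2 * Real.pi * ω * x : ℝ) : ℂ) * Complex.I) := by
    simp only [hg]
    congr 4 <;> ring
  have hpi : (Real.pi : ℂ) ≠ 0 := by exact_mod_cast Real.pi_ne_zero
  have hL : (∫ s in Set.Ioi (-x), (s : ℂ) * ((Real.exp (-Real.pi * s ^ 2) : ℝ) : ℂ) *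
      Complex.exp (((-2 * Real.pi * ω * s : ℝ) : ℂ) * Complex.I))
      = ∫ s in Set.Ioi (-x), (s : ℂ) * g s := by
    simp only [hg, mul_assoc]
  rw [hL, Complex.ofReal_mul, mul_assoc (Complex.ofReal (1 / _)), ← hgx]
  generalize (∫ s in Set.Ioi (-x), (s : ℂ) * g s) = I₁ at key ⊢
  push_cast
  field_simp
  linear_combination -key
end
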